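/- For θ > 0 and a₁,…,aₙ > 0, and (Y₁,…,Yₙ) a Dirichlet(θ/n,…,θ/n)-distributed (or more generally Dirichlet(θ₁,…,θₙ)) random vector, the generalized Markov–Krein identity holds: E[(1 + z·Σᵢ aᵢYᵢ)^{-θ}] = ∏ᵢ (1 + z aᵢ)^{-θᵢ} for all z ≥ 0, where θ = Σᵢ θᵢ. -/

import Mathlib

open MeasureTheory ProbabilityTheory Real Set

/-- The Dirichlet distribution with parameters `θ : Fin (n+1) → ℝ`, realized as a measure on
`Fin (n+1) → ℝ`. -/
noncomputable def dirichletMeasure {n : ℕ} (θ : Fin (n + 1) → ℝ) :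
    Measure (Fin (n + 1) → ℝ) :=
  Measure.map (fun y i => if h : (i : ℕ) < n then y ⟨i, h⟩ else 1 - ∑ j, y j)
    ((volume : Measure (Fin n → ℝ)).withDensity (fun y => ENNReal.ofReal
      (if (∀ i, 0 < y i) ∧ ∑ i, y i < 1 then
        (Real.Gamma (∑ i, θ i) / ∏ i, Real.Gamma (θ i)) *
          (∏ i : Fin n, y i ^ (θ i.castSucc - 1)) *
          (1 - ∑ i, y i) ^ (θ (Fin.last n) - 1)
      else 0)))

/-!
For `L > 0` the gamma integral reads `L ^ (-Θ) * Γ(Θ) = ∫ s ^ (Θ - 1) * exp (-s * L) ds`. Take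
`Θ = ∑ i, θ i` and `L = ∑ i, b i * Y i`: averaging over the Dirichlet vector `Y` turns the
right-hand side into an integral over the positive orthant in the coordinates `x = s • Y`, where
`s = ∑ i, x i`. In these coordinates the integrand is `∏ i, x i ^ (θ i - 1) * exp (-b i * x i)`, the
Jacobian `s ^ n` supplying the missing powers of `s`, so the integral factors into `n + 1` gamma
integrals. One may take `b i = 1 + z * a i` because the coordinates of `Y` sum to `1`.
-/

open scoped ENNReal

section Lebesgue

theorem lintegral_fin_prod_eq_prod {n : ℕ} {E : Fin n → Type*} [∀ i, MeasurableSpace (E i)]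
    (μ : (i : Fin n) → Measure (E i)) [∀ i, SigmaFinite (μ i)]
    {f : (i : Fin n) → E i → ℝ≥0∞} (hf : ∀ i, Measurable (f i)) :
    ∫⁻ x, ∏ i, f i (x i) ∂Measure.pi μ = ∏ i, ∫⁻ x, f i x ∂μ i := by
  induction n with
  | zero => simp
  | succ n ih =>
    calc ∫⁻ x, ∏ i, f i (x i) ∂Measure.pi μ
        = ∫⁻ p, f 0 p.1 * ∏ i, f (Fin.succAbove 0 i) (p.2 i)
            ∂(μ 0).prod (Measure.pi fun i ↦ μ (Fin.succAbove 0 i)) := by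
          rw [← (measurePreserving_piFinSuccAbove μ 0).symm.lintegral_comp_emb
            (MeasurableEquiv.measurableEmbedding _)]
          simp only [MeasurableEquiv.piFinSuccAbove_symm_apply, Fin.insertNthEquiv_apply,
            Fin.prod_univ_succAbove _ 0, Fin.insertNth_apply_same, Fin.insertNth_apply_succAbove]
      _ = (∫⁻ x, f 0 x ∂μ 0) * ∏ i, ∫⁻ x, f (Fin.succAbove 0 i) x ∂μ (Fin.succAbove 0 i) := by
          rw [← ih (fun i ↦ μ (Fin.succAbove 0 i)) fun i ↦ hf (Fin.succAbove 0 i)]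
          exact lintegral_prod_mul (hf 0).aemeasurable
            (Finset.measurable_prod _ fun i _ ↦ (hf _).comp (measurable_pi_apply i)).aemeasurable
      _ = ∏ i, ∫⁻ x, f i x ∂μ i := (Fin.prod_univ_succAbove (fun i ↦ ∫⁻ x, f i x ∂μ i) 0).symm

theorem lintegral_eq_abs_pow_finrank_mul_lintegral_smul {E : Type*} [NormedAddCommGroup E]
    [NormedSpace ℝ E] [FiniteDimensional ℝ E] [MeasurableSpace E] [BorelSpace E]
    (μ : Measure E) [μ.IsAddHaarMeasure] (f : E → ℝ≥0∞) {s : ℝ} (hs : s ≠ 0) :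
    ∫⁻ x, f x ∂μ = ENNReal.ofReal (|s| ^ Module.finrank ℝ E) * ∫⁻ x, f (s • x) ∂μ := by
  have hs' : |s| ^ Module.finrank ℝ E ≠ 0 := by positivity
  have h_map : ∫⁻ x, f (s • x) ∂μ = ∫⁻ x, f x ∂μ.map (s • ·) :=
    ((MeasurableEquiv.smul₀ s hs).measurableEmbedding.lintegral_map f).symm
  rw [h_map, Measure.map_addHaar_smul μ hs, lintegral_smul_measure, smul_eq_mul, ← mul_assoc,
    ← ENNReal.ofReal_mul (by positivity), abs_inv, abs_pow, mul_inv_cancel₀ hs',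
    ENNReal.ofReal_one, one_mul]

variable {n : ℕ} {f : (Fin (n + 1) → ℝ) → ℝ≥0∞}

theorem measurable_snoc :
    Measurable fun p : ℝ × (Fin n → ℝ) ↦ (Fin.snoc p.2 p.1 : Fin (n + 1) → ℝ) := by
  refine measurable_pi_lambda _ fun i ↦ ?_
  cases i using Fin.lastCases with
  | last => simp only [Fin.snoc_last]; fun_prop
  | cast i => simp only [Fin.snoc_castSucc]; fun_prop

theorem lintegral_eq_lintegral_snoc_sub_sum (hf : Measurable f) :
    ∫⁻ x, f x = ∫⁻ s : ℝ, ∫⁻ y : Fin n → ℝ, f (Fin.snoc y (s - ∑ j, y j)) := by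
  have h_last := (volume_preserving_piFinSuccAbove (fun _ : Fin (n + 1) ↦ ℝ) (Fin.last n)).symm
  calc ∫⁻ x, f x
      = ∫⁻ p : ℝ × (Fin n → ℝ), f (Fin.snoc p.2 p.1) := by
        rw [← h_last.lintegral_comp_emb (MeasurableEquiv.measurableEmbedding _)]
        simp only [MeasurableEquiv.piFinSuccAbove_symm_apply]
        exact lintegral_congr fun p ↦ congrArg f (Fin.insertNth_last' p.1 p.2)
    _ = ∫⁻ y : Fin n → ℝ, ∫⁻ t : ℝ, f (Fin.snoc y t) := by
        rw [Measure.volume_eq_prod]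
        exact lintegral_prod_symm _ (hf.comp measurable_snoc).aemeasurable
    _ = ∫⁻ y : Fin n → ℝ, ∫⁻ s : ℝ, f (Fin.snoc y (s - ∑ j, y j)) :=
        lintegral_congr fun y ↦
          (lintegral_sub_right_eq_self (fun t ↦ f (Fin.snoc y t)) (∑ j, y j)).symm
    _ = ∫⁻ s : ℝ, ∫⁻ y : Fin n → ℝ, f (Fin.snoc y (s - ∑ j, y j)) :=
        lintegral_lintegral_swap (hf.comp <| measurable_snoc.comp
          (f := fun p : (Fin n → ℝ) × ℝ ↦ (p.2 - ∑ j, p.1 j, p.1)) (by fun_prop)).aemeasurable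

end Lebesgue

section Simplex

variable {n : ℕ}

/-- The point of the hyperplane `∑ i, x i = 1` whose first `n` coordinates are `y`. It lies in the
standard simplex when `y` is nonnegative with sum at most `1`. -/
def simplexPoint (y : Fin n → ℝ) : Fin (n + 1) → ℝ :=
  Fin.snoc y (1 - ∑ j, y j)

@[simp]
theorem simplexPoint_castSucc (y : Fin n → ℝ) (i : Fin n) : simplexPoint y i.castSucc = y i := by
  simp [simplexPoint]

@[simp]
theorem simplexPoint_last (y : Fin n → ℝ) : simplexPoint y (Fin.last n) = 1 - ∑ j, y j := by
  simp [simplexPoint]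

@[fun_prop]
theorem measurable_simplexPoint : Measurable (simplexPoint (n := n)) :=
  measurable_snoc.comp (f := fun y : Fin n → ℝ ↦ (1 - ∑ j, y j, y)) (by fun_prop)

theorem sum_simplexPoint (y : Fin n → ℝ) : ∑ i, simplexPoint y i = 1 := by
  simp [Fin.sum_univ_castSucc]

theorem forall_simplexPoint_pos_iff {y : Fin n → ℝ} :
    (∀ i, 0 < simplexPoint y i) ↔ (∀ i, 0 < y i) ∧ ∑ i, y i < 1 := by
  simp [Fin.forall_fin_succ']

theorem smul_simplexPoint (s : ℝ) (y : Fin n → ℝ) :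
    s • simplexPoint y = Fin.snoc (s • y) (s - ∑ j, (s • y) j) := by
  ext i
  cases i using Fin.lastCases with
  | last => simp [mul_sub, Finset.mul_sum]
  | cast i => simp

/-- Polar coordinates whose radial variable is the sum of the coordinates. -/
theorem lintegral_eq_lintegral_smul_simplexPoint {f : (Fin (n + 1) → ℝ) → ℝ≥0∞}
    (hf : Measurable f) :
    ∫⁻ x, f x =
      ∫⁻ s : ℝ, ∫⁻ y : Fin n → ℝ, ENNReal.ofReal (|s| ^ n) * f (s • simplexPoint y) := by
  rw [lintegral_eq_lintegral_snoc_sub_sum hf]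
  refine lintegral_congr_ae ?_
  filter_upwards [Measure.ae_ne volume 0] with s hs
  rw [lintegral_eq_abs_pow_finrank_mul_lintegral_smul volume _ hs, Module.finrank_fin_fun,
    lintegral_const_mul' _ _ ENNReal.ofReal_ne_top]
  simp only [smul_simplexPoint]

end Simplex

section PosRpow

/-- The function `x ^ (c - 1)` on the positive half-line, extended by zero: the common factor of the
densities of the gamma and Dirichlet distributions. -/
noncomputable def posRpow (c : ℝ) : ℝ → ℝ≥0∞ :=
  (Ioi 0).indicator fun x ↦ ENNReal.ofReal (x ^ (c - 1))

@[fun_prop]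
theorem measurable_posRpow (c : ℝ) : Measurable (posRpow c) :=
  Measurable.indicator (by fun_prop) measurableSet_Ioi

theorem posRpow_of_pos (c : ℝ) {x : ℝ} (hx : 0 < x) :
    posRpow c x = ENNReal.ofReal (x ^ (c - 1)) :=
  indicator_of_mem (mem_Ioi.2 hx) _

theorem posRpow_of_nonpos (c : ℝ) {x : ℝ} (hx : x ≤ 0) : posRpow c x = 0 :=
  indicator_of_notMem (notMem_Ioi.2 hx) _

theorem posRpow_mul_of_pos (c : ℝ) {s : ℝ} (hs : 0 < s) (x : ℝ) :
    posRpow c (s * x) = ENNReal.ofReal (s ^ (c - 1)) * posRpow c x := by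
  rcases le_or_gt x 0 with hx | hx
  · rw [posRpow_of_nonpos c hx, posRpow_of_nonpos c (mul_nonpos_of_nonneg_of_nonpos hs.le hx),
      mul_zero]
  · rw [posRpow_of_pos c hx, posRpow_of_pos c (mul_pos hs hx), mul_rpow hs.le hx.le,
      ENNReal.ofReal_mul (by positivity)]

theorem lintegral_posRpow_mul_exp_neg_mul {c r : ℝ} (hc : 0 < c) (hr : 0 < r) :
    ∫⁻ x, posRpow c x * ENNReal.ofReal (exp (-(r * x))) =
      ENNReal.ofReal (r ^ (-c) * Gamma c) := by
  have h_gamma := integral_rpow_mul_exp_neg_mul_Ioi hc hr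
  have h_int : IntegrableOn (fun x ↦ x ^ (c - 1) * exp (-(r * x))) (Ioi 0) :=
    .of_integral_ne_zero (by have := Gamma_pos_of_pos hc; rw [h_gamma]; positivity)
  have h_nonneg : ∀ x ∈ Ioi (0 : ℝ), 0 ≤ x ^ (c - 1) * exp (-(r * x)) := fun x hx ↦
    mul_nonneg (rpow_nonneg (le_of_lt hx) _) (exp_pos _).le
  calc ∫⁻ x, posRpow c x * ENNReal.ofReal (exp (-(r * x)))
      = ∫⁻ x in Ioi 0, ENNReal.ofReal (x ^ (c - 1) * exp (-(r * x))) := by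
        rw [← lintegral_indicator measurableSet_Ioi]
        simp [posRpow, indicator_apply, ENNReal.ofReal_mul' (exp_pos _).le]
    _ = ENNReal.ofReal ((1 / r) ^ c * Gamma c) := by
        rw [← h_gamma, ofReal_integral_eq_lintegral_ofReal h_int
          ((ae_restrict_iff' measurableSet_Ioi).2 (.of_forall h_nonneg))]
    _ = ENNReal.ofReal (r ^ (-c) * Gamma c) := by
        rw [one_div, inv_rpow hr.le, rpow_neg hr.le]

variable {ι : Type*} [Fintype ι] (θ : ι → ℝ)

theorem prod_posRpow_of_pos {x : ι → ℝ} (hx : ∀ i, 0 < x i) :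
    ∏ i, posRpow (θ i) (x i) = ENNReal.ofReal (∏ i, x i ^ (θ i - 1)) := by
  rw [ENNReal.ofReal_prod_of_nonneg fun i _ ↦ rpow_nonneg (hx i).le _]
  exact Finset.prod_congr rfl fun i _ ↦ posRpow_of_pos _ (hx i)

theorem prod_posRpow_eq_zero {x : ι → ℝ} (hx : ¬ ∀ i, 0 < x i) :
    ∏ i, posRpow (θ i) (x i) = 0 := by
  obtain ⟨i, hi⟩ := not_forall.1 hx
  exact Finset.prod_eq_zero (Finset.mem_univ i) (posRpow_of_nonpos _ (not_lt.1 hi))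

theorem abs_pow_mul_prod_posRpow_smul {n : ℕ} (θ : Fin (n + 1) → ℝ) {x : Fin (n + 1) → ℝ}
    (hx : 0 ≤ ∑ i, x i) (s : ℝ) :
    ENNReal.ofReal (|s| ^ n) * ∏ i, posRpow (θ i) ((s • x) i) =
      posRpow (∑ i, θ i) s * ∏ i, posRpow (θ i) (x i) := by
  rcases le_or_gt s 0 with hs | hs
  · have h_not_pos : ¬ ∀ i, 0 < (s • x) i := fun h ↦ by
      have h_sum : 0 < ∑ i, (s • x) i := Finset.sum_pos (fun i _ ↦ h i) Finset.univ_nonempty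
      simp only [Pi.smul_apply, smul_eq_mul, ← Finset.mul_sum] at h_sum
      exact h_sum.not_ge (mul_nonpos_of_nonpos_of_nonneg hs hx)
    rw [prod_posRpow_eq_zero θ h_not_pos, posRpow_of_nonpos _ hs, mul_zero, zero_mul]
  · have h_exponent : s ^ n * s ^ (∑ i, (θ i - 1)) = s ^ (∑ i, θ i - 1) := by
      rw [← rpow_natCast, ← rpow_add hs]
      congr 1
      simp only [Finset.sum_sub_distrib, Finset.sum_const, Finset.card_univ, Fintype.card_fin,
        nsmul_eq_mul, mul_one, Nat.cast_add, Nat.cast_one]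
      ring
    simp only [Pi.smul_apply, smul_eq_mul, posRpow_mul_of_pos _ hs, Finset.prod_mul_distrib]
    rw [← ENNReal.ofReal_prod_of_nonneg fun i _ ↦ rpow_nonneg hs.le _, ← rpow_sum_of_pos hs,
      ← mul_assoc, ← ENNReal.ofReal_mul (by positivity), abs_of_pos hs, h_exponent,
      posRpow_of_pos _ hs]

theorem abs_pow_mul_prod_posRpow_mul_exp_smul {n : ℕ} (θ b : Fin (n + 1) → ℝ)
    {x : Fin (n + 1) → ℝ} (hx : 0 ≤ ∑ i, x i) (s : ℝ) :
    ENNReal.ofReal (|s| ^ n) * ∏ i, (posRpow (θ i) ((s • x) i) *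
        ENNReal.ofReal (exp (-(b i * (s • x) i)))) =
      (∏ i, posRpow (θ i) (x i)) *
        (posRpow (∑ i, θ i) s * ENNReal.ofReal (exp (-((∑ i, b i * x i) * s)))) := by
  have h_exponent : ∑ i, -(b i * (s • x) i) = -((∑ i, b i * x i) * s) := by
    simp only [Pi.smul_apply, smul_eq_mul, Finset.sum_neg_distrib, Finset.sum_mul, mul_comm s,
      mul_assoc]
  rw [Finset.prod_mul_distrib, ← mul_assoc, abs_pow_mul_prod_posRpow_smul θ hx,
    ← ENNReal.ofReal_prod_of_nonneg fun i _ ↦ (exp_pos _).le, ← exp_sum, h_exponent,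
    mul_left_comm, mul_assoc]

theorem lintegral_prod_posRpow_mul_exp {n : ℕ} {θ b : Fin n → ℝ} (hθ : ∀ i, 0 < θ i)
    (hb : ∀ i, 0 < b i) :
    ∫⁻ x : Fin n → ℝ, ∏ i, (posRpow (θ i) (x i) * ENNReal.ofReal (exp (-(b i * x i)))) =
      ENNReal.ofReal (∏ i, b i ^ (-θ i) * Gamma (θ i)) := by
  rw [volume_pi, lintegral_fin_prod_eq_prod _ (f := fun i t ↦ posRpow (θ i) t *
    ENNReal.ofReal (exp (-(b i * t)))) fun i ↦ by fun_prop]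
  simp_rw [lintegral_posRpow_mul_exp_neg_mul (hθ _) (hb _)]
  refine (ENNReal.ofReal_prod_of_nonneg fun i _ ↦ ?_).symm
  exact mul_nonneg (rpow_nonneg (hb i).le _) (Gamma_pos_of_pos (hθ i)).le

end PosRpow

section Dirichlet

variable {n : ℕ} {θ b : Fin (n + 1) → ℝ}

theorem dirichletMeasure_eq_map_simplexPoint (θ : Fin (n + 1) → ℝ) :
    dirichletMeasure θ = (volume.withDensity fun y ↦
      ENNReal.ofReal (Gamma (∑ i, θ i) / ∏ i, Gamma (θ i)) *
        ∏ i, posRpow (θ i) (simplexPoint y i)).map simplexPoint := by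
  -- `Fin.snoc` unfolds to the `dite` in `dirichletMeasure`, so only the densities need comparing.
  unfold dirichletMeasure
  congr 2 with y
  simp only [← forall_simplexPoint_pos_iff]
  split_ifs with hy
  · have h_monomial : ∏ i, simplexPoint y i ^ (θ i - 1) =
        (∏ i : Fin n, y i ^ (θ i.castSucc - 1)) * (1 - ∑ i, y i) ^ (θ (Fin.last n) - 1) := by
      simp [Fin.prod_univ_castSucc]
    rw [prod_posRpow_of_pos θ hy, ← ENNReal.ofReal_mul'
      (Finset.prod_nonneg fun i _ ↦ rpow_nonneg (hy i).le _), h_monomial, mul_assoc]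
  · rw [prod_posRpow_eq_zero θ hy, mul_zero, ENNReal.ofReal_zero]

theorem lintegral_dirichletMeasure (θ : Fin (n + 1) → ℝ) {f : (Fin (n + 1) → ℝ) → ℝ≥0∞}
    (hf : Measurable f) :
    ∫⁻ x, f x ∂dirichletMeasure θ =
      ENNReal.ofReal (Gamma (∑ i, θ i) / ∏ i, Gamma (θ i)) *
        ∫⁻ y, (∏ i, posRpow (θ i) (simplexPoint y i)) * f (simplexPoint y) := by
  rw [dirichletMeasure_eq_map_simplexPoint, lintegral_map hf measurable_simplexPoint,
    lintegral_withDensity_eq_lintegral_mul _ (by fun_prop) (by fun_prop),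
    ← lintegral_const_mul' _ _ ENNReal.ofReal_ne_top]
  simp only [Pi.mul_apply, mul_assoc]

theorem ae_dirichletMeasure_sum_eq_one (θ : Fin (n + 1) → ℝ) :
    ∀ᵐ x ∂dirichletMeasure θ, ∑ i, x i = 1 := by
  rw [dirichletMeasure_eq_map_simplexPoint, ae_map_iff measurable_simplexPoint.aemeasurable
    (measurableSet_eq_fun (by fun_prop) measurable_const)]
  exact .of_forall sum_simplexPoint

theorem ae_dirichletMeasure_pos (θ : Fin (n + 1) → ℝ) :
    ∀ᵐ x ∂dirichletMeasure θ, ∀ i, 0 < x i := by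
  rw [dirichletMeasure_eq_map_simplexPoint, ae_map_iff measurable_simplexPoint.aemeasurable
    (by measurability), ae_withDensity_iff (by fun_prop)]
  refine .of_forall fun y hy ↦ ?_
  by_contra h_pos
  exact hy (by rw [prod_posRpow_eq_zero θ h_pos, mul_zero])

theorem lintegral_prod_posRpow_simplexPoint_mul_rpow (hθ : ∀ i, 0 < θ i) (hb : ∀ i, 0 < b i) :
    ∫⁻ y, (∏ i, posRpow (θ i) (simplexPoint y i)) *
        ENNReal.ofReal ((∑ i, b i * simplexPoint y i) ^ (-∑ i, θ i) * Gamma (∑ i, θ i)) =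
      ENNReal.ofReal (∏ i, b i ^ (-θ i) * Gamma (θ i)) := by
  have hΘ : 0 < ∑ i, θ i := Finset.sum_pos (fun i _ ↦ hθ i) Finset.univ_nonempty
  have h_sum (y : Fin n → ℝ) : 0 ≤ ∑ i, simplexPoint y i := by simp [sum_simplexPoint]
  set w : (Fin n → ℝ) → ℝ≥0∞ := fun y ↦ ∏ i, posRpow (θ i) (simplexPoint y i) with hw
  set L : (Fin n → ℝ) → ℝ := fun y ↦ ∑ i, b i * simplexPoint y i with hL
  have h_radial (y : Fin n → ℝ) :
      ∫⁻ s : ℝ, w y * (posRpow (∑ i, θ i) s * ENNReal.ofReal (exp (-(L y * s)))) =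
        w y * ENNReal.ofReal (L y ^ (-∑ i, θ i) * Gamma (∑ i, θ i)) := by
    rw [lintegral_const_mul _ (by fun_prop)]
    by_cases hy : ∀ i, 0 < simplexPoint y i
    · rw [lintegral_posRpow_mul_exp_neg_mul hΘ
        (Finset.sum_pos (fun i _ ↦ mul_pos (hb i) (hy i)) Finset.univ_nonempty)]
    · simp only [hw, prod_posRpow_eq_zero θ hy, zero_mul]
  calc ∫⁻ y, w y * ENNReal.ofReal (L y ^ (-∑ i, θ i) * Gamma (∑ i, θ i))
      = ∫⁻ s : ℝ, ∫⁻ y, w y * (posRpow (∑ i, θ i) s * ENNReal.ofReal (exp (-(L y * s)))) := by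
        simp_rw [← h_radial]
        exact lintegral_lintegral_swap (by fun_prop)
    _ = ∫⁻ x : Fin (n + 1) → ℝ,
          ∏ i, (posRpow (θ i) (x i) * ENNReal.ofReal (exp (-(b i * x i)))) := by
        rw [lintegral_eq_lintegral_smul_simplexPoint (by fun_prop)]
        simp_rw [abs_pow_mul_prod_posRpow_mul_exp_smul θ b (h_sum _), hw, hL]
    _ = ENNReal.ofReal (∏ i, b i ^ (-θ i) * Gamma (θ i)) := lintegral_prod_posRpow_mul_exp hθ hb

theorem lintegral_rpow_dirichletMeasure (hθ : ∀ i, 0 < θ i) (hb : ∀ i, 0 < b i) :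
    ∫⁻ x, ENNReal.ofReal ((∑ i, b i * x i) ^ (-∑ i, θ i)) ∂dirichletMeasure θ =
      ENNReal.ofReal (∏ i, b i ^ (-θ i)) := by
  have hΘ : 0 < Gamma (∑ i, θ i) :=
    Gamma_pos_of_pos (Finset.sum_pos (fun i _ ↦ hθ i) Finset.univ_nonempty)
  have h_prod : 0 < ∏ i, Gamma (θ i) := Finset.prod_pos fun i _ ↦ Gamma_pos_of_pos (hθ i)
  rw [lintegral_dirichletMeasure θ (by fun_prop), div_eq_inv_mul,
    ENNReal.ofReal_mul (by positivity), mul_assoc, ← lintegral_const_mul' _ _ ENNReal.ofReal_ne_top]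
  simp_rw [mul_left_comm (ENNReal.ofReal (Gamma _)), ← ENNReal.ofReal_mul hΘ.le,
    mul_comm (Gamma (∑ i, θ i))]
  rw [lintegral_prod_posRpow_simplexPoint_mul_rpow hθ hb, ← ENNReal.ofReal_mul (by positivity),
    Finset.prod_mul_distrib]
  congr 1
  field_simp

theorem integral_rpow_dirichletMeasure (hθ : ∀ i, 0 < θ i) (hb : ∀ i, 0 < b i) :
    ∫ x, (∑ i, b i * x i) ^ (-∑ i, θ i) ∂dirichletMeasure θ = ∏ i, b i ^ (-θ i) := by
  have h_nonneg : ∀ᵐ x ∂dirichletMeasure θ, 0 ≤ (∑ i, b i * x i) ^ (-∑ i, θ i) := by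
    filter_upwards [ae_dirichletMeasure_pos θ] with x hx
    exact rpow_nonneg (Finset.sum_nonneg fun i _ ↦ (mul_pos (hb i) (hx i)).le) _
  rw [integral_eq_lintegral_of_nonneg_ae h_nonneg (Measurable.aestronglyMeasurable (by fun_prop)),
    lintegral_rpow_dirichletMeasure hθ hb,
    ENNReal.toReal_ofReal (Finset.prod_nonneg fun i _ ↦ rpow_nonneg (hb i).le _)]

end Dirichlet

theorem markov_krein_dirichlet_general {n : ℕ} {Ω : Type*} [MeasurableSpace Ω] {P : Measure Ω}
    {θ : Fin (n + 1) → ℝ} (hθ : ∀ i, 0 < θ i) {Y : Ω → Fin (n + 1) → ℝ}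
    (hY : HasLaw Y (dirichletMeasure θ) P) {a : Fin (n + 1) → ℝ} {z : ℝ}
    (hza : ∀ i, 0 < 1 + z * a i) :
    ∫ ω, (1 + z * ∑ i, a i * Y ω i) ^ (-(∑ i, θ i)) ∂P = ∏ i, (1 + z * a i) ^ (-(θ i)) := by
  calc ∫ ω, (1 + z * ∑ i, a i * Y ω i) ^ (-(∑ i, θ i)) ∂P
      = ∫ x, (1 + z * ∑ i, a i * x i) ^ (-(∑ i, θ i)) ∂dirichletMeasure θ :=
        hY.integral_comp (f := fun x ↦ (1 + z * ∑ i, a i * x i) ^ (-(∑ i, θ i)))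
          (Measurable.aestronglyMeasurable (by fun_prop))
    _ = ∫ x, (∑ i, (1 + z * a i) * x i) ^ (-(∑ i, θ i)) ∂dirichletMeasure θ := by
        refine integral_congr_ae ?_
        filter_upwards [ae_dirichletMeasure_sum_eq_one θ] with x hx
        simp only [add_mul, one_mul, Finset.sum_add_distrib, hx, mul_assoc, Finset.mul_sum]
    _ = ∏ i, (1 + z * a i) ^ (-(θ i)) := integral_rpow_dirichletMeasure hθ hza

/-- The generalized Markov–Krein identity for a Dirichlet random vector:
`E[(1 + z Σ aᵢ Yᵢ)^{-θ}] = ∏ (1 + z aᵢ)^{-θᵢ}`, where `θ = Σ θᵢ`. -/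
theorem markov_krein_dirichlet
    {n : ℕ} {Ω : Type*} [MeasurableSpace Ω] (P : Measure Ω) [IsProbabilityMeasure P]
    (θ : Fin (n + 1) → ℝ) (hθ : ∀ i, 0 < θ i)
    (a : Fin (n + 1) → ℝ) (ha : ∀ i, 0 < a i)
    (Y : Ω → Fin (n + 1) → ℝ) (hmY : Measurable Y)
    (hY : Measure.map Y P = dirichletMeasure θ)
    {z : ℝ} (hz : 0 ≤ z) :
    ∫ ω, (1 + z * ∑ i, a i * Y ω i) ^ (-(∑ i, θ i)) ∂P
      = ∏ i, (1 + z * a i) ^ (-(θ i)) :=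
  markov_krein_dirichlet_general hθ ⟨hmY.aemeasurable, hY⟩ fun i ↦
    add_pos_of_pos_of_nonneg one_pos (mul_nonneg hz (ha i).le)
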